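/- Let 𝒫 be a configuration of n points in general position in the plane, with n odd. Then there exists an integer i with 0 ≤ i ≤ n such that the number of unordered pairs {P,Q} of distinct points of 𝒫 for which n(P,Q) is odd equals i(n−i); for all remaining pairs, n(P,Q) is even. -/

import Mathlib

open scoped Classical

noncomputable section

/-- The set Pts is in general position: no three distinct points are collinear. -/
def GenPos (Pts : Finset (ℝ × ℝ)) : Prop :=
  ∀ A ∈ Pts, ∀ B ∈ Pts, ∀ C ∈ Pts, A ≠ B → A ≠ C → B ≠ C →
    ¬ Collinear ℝ ({A, B, C} : Set (ℝ × ℝ))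

/-- `sepCount Pts P Q` is the number of unordered pairs `{R, S}` of points of `Pts \ {P, Q}`
such that the line through `R` and `S` strictly separates `P` and `Q`. -/
def sepCount (Pts : Finset (ℝ × ℝ)) (P Q : ℝ × ℝ) : ℕ :=
  ((Finset.powersetCard 2 (Pts \ {P, Q})).filter
    (fun s => (affineSpan ℝ (↑s : Set (ℝ × ℝ))).SOppSide P Q)).card

/-- The vertices of the convex hull of `Pts` (its extreme points). -/
def hullVertices (Pts : Finset (ℝ × ℝ)) : Set (ℝ × ℝ) :=
  Set.extremePoints ℝ (convexHull ℝ (↑Pts : Set (ℝ × ℝ)))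

/-- `Q : ZMod k → ℝ × ℝ` lists the points of `S` in convex position, in cyclic order:
`Q` is an injective enumeration of `S` and, for every `i`, all points of `S` other than
`Q i` and `Q (i+1)` lie strictly on the same side of the line through `Q i` and `Q (i+1)`
(i.e. each consecutive pair spans an edge of the convex hull of `S`). -/
def IsConvexCycle (k : ℕ) (S : Set (ℝ × ℝ)) (Q : ZMod k → ℝ × ℝ) : Prop :=
  Function.Injective Q ∧ Set.range Q = S ∧
    ∀ i : ZMod k, ∀ x ∈ S, ∀ y ∈ S,
      x ∉ ({Q i, Q (i + 1)} : Set (ℝ × ℝ)) → y ∉ ({Q i, Q (i + 1)} : Set (ℝ × ℝ)) →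
        (affineSpan ℝ ({Q i, Q (i + 1)} : Set (ℝ × ℝ))).SSameSide x y

/-!
Fix three points `P`, `Q`, `R` of the configuration and count, modulo 2, the incidences between the
lines spanned by two of the points and the sides of the triangle `PQR` that they cross. A line
missing all three vertices crosses an even number of sides. For each further point `S`, the lines
`PS`, `QS`, `RS` together cross an odd number of sides: each of the three pairs `A`, `B` of vertices
contributes the side of `AS` on which `B` lies and the side of `BS` on which `A` lies, and these
have opposite signs. Hence `n(P,Q) + n(Q,R) + n(P,R) ≡ n - 3 (mod 2)`, so the pairs with
`n(P,Q) ≡ n (mod 2)` are exactly the pairs split by some partition of the points into two parts.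
-/

/-! ### Pairs of elements of a finite set -/

section Pairs

open Finset

variable {α M : Type*} [AddCommMonoid M]

theorem exists_bipartition_of_xor {s : Finset α} {r : α → α → Prop} [Std.Symm r]
    (hxor : ∀ x ∈ s, ∀ y ∈ s, ∀ z ∈ s, x ≠ y → x ≠ z → y ≠ z → (r y z ↔ Xor (r x y) (r x z))) :
    ∃ A ⊆ s, ∀ x ∈ s, ∀ y ∈ s, x ≠ y → (r x y ↔ Xor (x ∈ A) (y ∈ A)) := by
  obtain rfl | ⟨o, ho⟩ := s.eq_empty_or_nonempty
  · exact ⟨∅, by simp⟩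
  refine ⟨{x ∈ s | x ≠ o ∧ r o x}, filter_subset _ _, fun x hx y hy hxy => ?_⟩
  simp only [mem_filter, hx, hy, true_and]
  obtain rfl | hxo := eq_or_ne x o
  · simp [hxy.symm]
  obtain rfl | hyo := eq_or_ne y o
  · simp [hxy, comm_of r (a := x), xor_iff_not_iff]
  simpa only [ne_eq, hxo, hyo, not_false_eq_true, true_and] using
    hxor o ho x hx y hy hxo.symm hyo.symm hxy

variable [DecidableEq α]

theorem sum_powersetCard_two_insert {x : α} {s : Finset α} (hx : x ∉ s) (f : Finset α → M) :
    ∑ p ∈ powersetCard 2 (insert x s), f p =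
      ∑ p ∈ powersetCard 2 s, f p + ∑ y ∈ s, f {x, y} := by
  have hdisj : Disjoint (powersetCard 2 s) ((powersetCard 1 s).image (insert x)) := by
    rw [disjoint_left]
    intro p hp hp'
    obtain ⟨q, -, rfl⟩ := mem_image.1 hp'
    exact hx ((mem_powersetCard.1 hp).1 (mem_insert_self x q))
  have hinj : Set.InjOn (insert x) (powersetCard 1 s : Set (Finset α)) := by
    intro p hp q hq h
    have notMem {t : Finset α} (ht : t ∈ powersetCard 1 s) : x ∉ t :=
      fun hxt => hx ((mem_powersetCard.1 ht).1 hxt)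
    rw [← erase_insert (notMem hp), h, erase_insert (notMem hq)]
  rw [powersetCard_succ_insert hx, sum_union hdisj, sum_image hinj, powersetCard_one, sum_map]
  rfl

theorem sum_powersetCard_two_union {s t : Finset α} (hst : Disjoint s t) (f : Finset α → M) :
    ∑ p ∈ powersetCard 2 (s ∪ t), f p =
      ∑ p ∈ powersetCard 2 s, f p + ∑ x ∈ s, ∑ y ∈ t, f {x, y} +
        ∑ p ∈ powersetCard 2 t, f p := by
  induction s using Finset.induction_on with
  | empty => simp [powersetCard_eq_empty.2 (show #(∅ : Finset α) < 2 by simp)]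
  | insert x s hx ih =>
    obtain ⟨hxt, hst⟩ := disjoint_insert_left.1 hst
    rw [insert_union, sum_powersetCard_two_insert (by simp [hx, hxt]), ih hst,
      sum_powersetCard_two_insert hx, sum_union hst, sum_insert hx]
    abel

/-- The unordered pairs of distinct elements of `s` that are related by `r` in at least one of the
two orders. -/
def relatedPairs (s : Finset α) (r : α → α → Prop) : Finset (Finset α) :=
  (powersetCard 2 s).filter (fun p => ∃ x y : α, x ≠ y ∧ p = {x, y} ∧ r x y)

theorem pair_mem_relatedPairs {s : Finset α} {r : α → α → Prop} [Std.Symm r] {x y : α}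
    (hx : x ∈ s) (hy : y ∈ s) (hxy : x ≠ y) : {x, y} ∈ relatedPairs s r ↔ r x y := by
  have hpair : {x, y} ∈ powersetCard 2 s :=
    mem_powersetCard.2 ⟨insert_subset hx (singleton_subset_iff.2 hy), card_pair hxy⟩
  rw [relatedPairs, mem_filter, and_iff_right hpair]
  refine ⟨?_, fun h => ⟨x, y, hxy, rfl, h⟩⟩
  rintro ⟨a, b, -, hab, h⟩
  rw [← coe_inj, coe_pair, coe_pair, Set.pair_eq_pair_iff] at hab
  rcases hab with ⟨rfl, rfl⟩ | ⟨rfl, rfl⟩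
  exacts [h, symm_of r h]

theorem relatedPairs_not {s : Finset α} {r : α → α → Prop} [Std.Symm r] :
    relatedPairs s (fun x y => ¬ r x y) = powersetCard 2 s \ relatedPairs s r := by
  have : Std.Symm fun x y => ¬ r x y := ⟨fun _ _ h h' => h (symm_of r h')⟩
  ext p
  rw [mem_sdiff]
  by_cases hp : p ∈ powersetCard 2 s
  · obtain ⟨hps, x, y, hxy, rfl⟩ := And.imp_right card_eq_two.1 (mem_powersetCard.1 hp)
    obtain ⟨hx, hy⟩ : x ∈ s ∧ y ∈ s := ⟨hps (by simp), hps (by simp)⟩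
    rw [pair_mem_relatedPairs hx hy hxy, pair_mem_relatedPairs hx hy hxy, and_iff_right hp]
  · exact iff_of_false (fun h => hp (mem_filter.1 h).1) (fun h => hp h.1)

theorem card_relatedPairs_not {s : Finset α} {r : α → α → Prop} [Std.Symm r] :
    #(relatedPairs s fun x y => ¬ r x y) = (#s).choose 2 - #(relatedPairs s r) := by
  have hsub : relatedPairs s r ⊆ powersetCard 2 s := filter_subset _ _
  rw [relatedPairs_not, card_sdiff_of_subset hsub, card_powersetCard]

theorem card_relatedPairs_of_bipartition {s A : Finset α} {r : α → α → Prop} (hA : A ⊆ s)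
    (hr : ∀ x ∈ s, ∀ y ∈ s, x ≠ y → (r x y ↔ Xor (x ∈ A) (y ∈ A))) :
    #(relatedPairs s r) = #A * (#s - #A) := by
  have within {t : Finset α} (hts : t ⊆ s) (ht : ∀ x ∈ t, ∀ y ∈ t, (x ∈ A ↔ y ∈ A)) :
      ∀ p ∈ powersetCard 2 t, ¬ ∃ x y : α, x ≠ y ∧ p = {x, y} ∧ r x y := by
    rintro p hp ⟨x, y, hxy, rfl, h⟩
    have hpt := (mem_powersetCard.1 hp).1
    obtain ⟨hx, hy⟩ : x ∈ t ∧ y ∈ t := ⟨hpt (by simp), hpt (by simp)⟩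
    exact (xor_iff_not_iff _ _).1 ((hr x (hts hx) y (hts hy) hxy).1 h) (ht x hx y hy)
  have across : ∀ x ∈ A, ∀ y ∈ s \ A, ∃ a b : α, a ≠ b ∧ ({x, y} : Finset α) = {a, b} ∧ r a b := by
    intro x hx y hy
    obtain ⟨hys, hyA⟩ := mem_sdiff.1 hy
    have hxy : x ≠ y := ne_of_mem_of_not_mem hx hyA
    exact ⟨x, y, hxy, rfl, (hr x (hA hx) y hys hxy).2 (.inl ⟨hx, hyA⟩)⟩
  rw [relatedPairs, card_filter, ← union_sdiff_of_subset hA,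
    sum_powersetCard_two_union disjoint_sdiff,
    sum_eq_zero fun p hp => if_neg (within hA (by grind) p hp),
    sum_eq_zero fun p hp => if_neg (within sdiff_subset (by grind) p hp),
    sum_congr rfl fun x hx => sum_congr rfl fun y hy => if_pos (across x hx y hy)]
  simp [card_sdiff_of_subset hA, union_sdiff_of_subset hA]

theorem exists_card_relatedPairs_eq_mul {s : Finset α} {r : α → α → Prop} [Std.Symm r]
    (hxor : ∀ x ∈ s, ∀ y ∈ s, ∀ z ∈ s, x ≠ y → x ≠ z → y ≠ z → (r y z ↔ Xor (r x y) (r x z))) :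
    ∃ i ≤ #s, #(relatedPairs s r) = i * (#s - i) := by
  obtain ⟨A, hA, hrA⟩ := exists_bipartition_of_xor hxor
  exact ⟨#A, card_le_card hA, card_relatedPairs_of_bipartition hA hrA⟩

end Pairs

/-! ### Sides of hyperplanes modulo 2 -/

section Sides

variable {K V E : Type*} [Field K] [LinearOrder K] [IsStrictOrderedRing K] [AddCommGroup V]
  [Module K V] [AddTorsor V E]

theorem sOppSide_iff_mul_neg {s : AffineSubspace K E} {f : E →ᵃ[K] K}
    (hs : ∀ x, x ∈ s ↔ f x = 0) {x y : E} : s.SOppSide x y ↔ f x * f y < 0 := by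
  constructor
  · rintro ⟨hopp, hx, hy⟩
    obtain ⟨p, hp, hbtw⟩ := AffineSubspace.wOppSide_iff_exists_wbtw.1 hopp
    have hzero : Wbtw K (f x) 0 (f y) := (hs p).1 hp ▸ hbtw.map f
    have hle : f x * f y ≤ 0 := by
      rcases le_total (f x) (f y) with h | h
      · obtain ⟨hx, hy⟩ := (wbtw_iff_of_le h).1 hzero
        exact mul_nonpos_of_nonpos_of_nonneg hx hy
      · obtain ⟨hy, hx⟩ := (wbtw_iff_of_le h).1 hzero.symm
        exact mul_nonpos_of_nonneg_of_nonpos hx hy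
    exact hle.lt_of_ne (mul_ne_zero (mt (hs x).2 hx) (mt (hs y).2 hy))
  · intro hneg
    have hx : f x ≠ 0 := left_ne_zero_of_mul hneg.ne
    have hy : f y ≠ 0 := right_ne_zero_of_mul hneg.ne
    have hsub : 0 < f x ^ 2 - f x * f y := by linarith [sq_nonneg (f x)]
    refine ⟨AffineSubspace.wOppSide_iff_exists_wbtw.2 ⟨_, ?_, f x ^ 2 / (f x ^ 2 - f x * f y),
      ⟨by positivity, (div_le_one hsub).2 (by linarith)⟩, rfl⟩, mt (hs x).1 hx, mt (hs y).1 hy⟩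
    rw [hs, AffineMap.apply_lineMap, AffineMap.lineMap_apply_ring']
    apply mul_left_cancel₀ hx
    linear_combination -(div_mul_cancel₀ (f x ^ 2) hsub.ne')

/-- The indicator in `ZMod 2` of `s` strictly separating `x` and `y`. -/
def oppSideBit (s : AffineSubspace K E) (x y : E) : ZMod 2 :=
  if s.SOppSide x y then 1 else 0

/-- The indicator in `ZMod 2` of `x` lying on the positive side of the hyperplane `f = 0`. -/
def posSideBit (f : E →ᵃ[K] K) (x : E) : ZMod 2 :=
  if 0 < f x then 1 else 0

/-- The number, modulo 2, of sides of the triangle `x y z` whose endpoints are strictly separated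
by `s`. -/
def triangleCrossings (s : AffineSubspace K E) (x y z : E) : ZMod 2 :=
  oppSideBit s x y + oppSideBit s y z + oppSideBit s x z

theorem oppSideBit_eq_zero_of_left_mem {s : AffineSubspace K E} {x : E} (hx : x ∈ s) (y : E) :
    oppSideBit s x y = 0 :=
  if_neg fun h => h.left_notMem hx

theorem oppSideBit_eq_zero_of_right_mem {s : AffineSubspace K E} (x : E) {y : E} (hy : y ∈ s) :
    oppSideBit s x y = 0 :=
  if_neg fun h => h.right_notMem hy

theorem oppSideBit_eq_posSideBit_add {s : AffineSubspace K E} {f : E →ᵃ[K] K}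
    (hs : ∀ x, x ∈ s ↔ f x = 0) {x y : E} (hx : f x ≠ 0) (hy : f y ≠ 0) :
    oppSideBit s x y = posSideBit f x + posSideBit f y := by
  rw [oppSideBit, posSideBit, posSideBit, sOppSide_iff_mul_neg hs, mul_neg_iff]
  rcases hx.lt_or_gt with hx | hx <;> rcases hy.lt_or_gt with hy | hy <;>
    simp [hx, hy, hx.not_gt, hy.not_gt, CharTwo.add_self_eq_zero]

theorem triangleCrossings_eq_zero {s : AffineSubspace K E} {f : E →ᵃ[K] K}
    (hs : ∀ x, x ∈ s ↔ f x = 0) {x y z : E} (hx : f x ≠ 0) (hy : f y ≠ 0) (hz : f z ≠ 0) :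
    triangleCrossings s x y z = 0 := by
  rw [triangleCrossings, oppSideBit_eq_posSideBit_add hs hx hy,
    oppSideBit_eq_posSideBit_add hs hy hz, oppSideBit_eq_posSideBit_add hs hx hz]
  grind

theorem sum_triangleCrossings_vertices [DecidableEq E] {x y z : E} (hxy : x ≠ y) (hxz : x ≠ z)
    (hyz : y ≠ z) :
    ∑ p ∈ Finset.powersetCard 2 {x, y, z},
      triangleCrossings (affineSpan K (p : Set E)) x y z = 0 := by
  have hx : x ∉ ({y, z} : Finset E) := by simp [hxy, hxz]
  have hy : y ∉ ({z} : Finset E) := by simp [hyz]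
  rw [sum_powersetCard_two_insert hx, sum_powersetCard_two_insert hy]
  simp [triangleCrossings, Finset.powersetCard_eq_empty.2, hyz, oppSideBit_eq_zero_of_left_mem,
    oppSideBit_eq_zero_of_right_mem, left_mem_affineSpan_pair, right_mem_affineSpan_pair]

end Sides

/-! ### Lines in the plane -/

section Plane

section CommRing

variable {K : Type*} [CommRing K]

/-- Twice the oriented area of the triangle `A B C`, as an affine function of `C`: for `A ≠ B` the
line `AB` is its zero set. -/
def signedArea (A B : K × K) : K × K →ᵃ[K] K :=
  (B.1 - A.1) • (LinearMap.snd K K K).toAffineMap - (B.2 - A.2) • (LinearMap.fst K K K).toAffineMap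
    - AffineMap.const K (K × K) ((B.1 - A.1) * A.2 - (B.2 - A.2) * A.1)

theorem signedArea_apply (A B C : K × K) :
    signedArea A B C = (B.1 - A.1) * (C.2 - A.2) - (B.2 - A.2) * (C.1 - A.1) := by
  simp only [signedArea, AffineMap.coe_sub, AffineMap.coe_smul, LinearMap.coe_toAffineMap,
    LinearMap.coe_snd, LinearMap.coe_fst, AffineMap.coe_const, Pi.sub_apply, Pi.smul_apply,
    smul_eq_mul, Function.const_apply]
  ring

theorem signedArea_swap (A B C : K × K) : signedArea C B A = -signedArea A B C := by
  simp only [signedArea_apply]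
  ring

theorem ne_of_signedArea_ne_zero {A B C : K × K} (h : signedArea A B C ≠ 0) : A ≠ B := by
  rintro rfl
  simp [signedArea_apply] at h

end CommRing

variable {K : Type*} [Field K]

theorem mem_affineSpan_pair_iff_signedArea_eq_zero {A B : K × K} (hAB : A ≠ B) (X : K × K) :
    X ∈ affineSpan K {A, B} ↔ signedArea A B X = 0 := by
  rw [mem_affineSpan_pair_iff_exists_lineMap_eq, signedArea_apply]
  simp only [Prod.ext_iff, AffineMap.fst_lineMap, AffineMap.snd_lineMap,
    AffineMap.lineMap_apply_ring']
  constructor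
  · rintro ⟨t, hfst, hsnd⟩
    rw [← hfst, ← hsnd]
    ring
  · intro h
    have hdir : B.1 - A.1 ≠ 0 ∨ B.2 - A.2 ≠ 0 := by
      contrapose! hAB
      exact Prod.ext (sub_eq_zero.1 hAB.1).symm (sub_eq_zero.1 hAB.2).symm
    rcases hdir with hfst | hsnd
    · refine ⟨(X.1 - A.1) / (B.1 - A.1), by field_simp; ring, ?_⟩
      field_simp
      linear_combination -h
    · refine ⟨(X.2 - A.2) / (B.2 - A.2), ?_, by field_simp; ring⟩
      field_simp
      linear_combination h

variable [LinearOrder K] [IsStrictOrderedRing K]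

theorem posSideBit_signedArea_add_swap {A B C : K × K} (h : signedArea A B C ≠ 0) :
    posSideBit (signedArea A B) C + posSideBit (signedArea C B) A = 1 := by
  rw [posSideBit, posSideBit, signedArea_swap A B C]
  rcases h.lt_or_gt with h | h <;> simp [h, h.not_gt]

theorem oppSideBit_line {A B P Q : K × K} (hP : signedArea A B P ≠ 0) (hQ : signedArea A B Q ≠ 0) :
    oppSideBit (affineSpan K {A, B}) P Q =
      posSideBit (signedArea A B) P + posSideBit (signedArea A B) Q :=
  oppSideBit_eq_posSideBit_add
    (mem_affineSpan_pair_iff_signedArea_eq_zero (ne_of_signedArea_ne_zero hP)) hP hQ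

theorem triangleCrossings_vertex_lines {P Q R S : K × K} (hPQ : signedArea P S Q ≠ 0)
    (hPR : signedArea P S R ≠ 0) (hQR : signedArea Q S R ≠ 0) :
    triangleCrossings (affineSpan K {P, S}) P Q R + triangleCrossings (affineSpan K {Q, S}) P Q R +
      triangleCrossings (affineSpan K {R, S}) P Q R = 1 := by
  have swap {A B : K × K} (h : signedArea A S B ≠ 0) : signedArea B S A ≠ 0 := by
    rwa [signedArea_swap, neg_ne_zero]
  have hmem (A : K × K) : A ∈ affineSpan K {A, S} := left_mem_affineSpan_pair K A S
  have hP : triangleCrossings (affineSpan K {P, S}) P Q R =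
      posSideBit (signedArea P S) Q + posSideBit (signedArea P S) R := by
    simp [triangleCrossings, oppSideBit_eq_zero_of_left_mem (hmem P), oppSideBit_line hPQ hPR]
  have hQ : triangleCrossings (affineSpan K {Q, S}) P Q R =
      posSideBit (signedArea Q S) P + posSideBit (signedArea Q S) R := by
    simp [triangleCrossings, oppSideBit_eq_zero_of_left_mem (hmem Q),
      oppSideBit_eq_zero_of_right_mem _ (hmem Q), oppSideBit_line (swap hPQ) hQR]
  have hR : triangleCrossings (affineSpan K {R, S}) P Q R =
      posSideBit (signedArea R S) P + posSideBit (signedArea R S) Q := by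
    simp [triangleCrossings, oppSideBit_eq_zero_of_right_mem _ (hmem R),
      oppSideBit_line (swap hPR) (swap hQR)]
  have hthree : (1 : ZMod 2) + 1 + 1 = 1 := by decide
  rw [hP, hQ, hR]
  linear_combination posSideBit_signedArea_add_swap hPQ + posSideBit_signedArea_add_swap hPR +
    posSideBit_signedArea_add_swap hQR + hthree

end Plane

/-! ### Separation counts of a configuration -/

section Configuration

open Finset

variable {Pts : Finset (ℝ × ℝ)} {P Q R : ℝ × ℝ}

theorem GenPos.signedArea_ne_zero (hgen : GenPos Pts) (hP : P ∈ Pts) (hQ : Q ∈ Pts) (hR : R ∈ Pts)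
    (hPQ : P ≠ Q) (hPR : P ≠ R) (hQR : Q ≠ R) : signedArea P Q R ≠ 0 := fun h =>
  hgen R hR P hP Q hQ hPR.symm hQR.symm hPQ <| collinear_insert_of_mem_affineSpan_pair <|
    (mem_affineSpan_pair_iff_signedArea_eq_zero hPQ R).2 h

theorem sepCount_comm (Pts : Finset (ℝ × ℝ)) (P Q : ℝ × ℝ) :
    sepCount Pts P Q = sepCount Pts Q P := by
  simp only [sepCount, pair_comm P Q, AffineSubspace.sOppSide_comm (x := P)]

-- In `sepCount` the index `s` elaborates to a `Set`, so the filtered family there is the image of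
-- `powersetCard 2 (Pts \ {P, Q})` under the coercion from finsets to sets.
theorem sepCount_eq_card_filter (Pts : Finset (ℝ × ℝ)) (P Q : ℝ × ℝ) :
    sepCount Pts P Q = #((powersetCard 2 (Pts \ {P, Q})).filter
      fun s : Finset (ℝ × ℝ) => (affineSpan ℝ (s : Set (ℝ × ℝ))).SOppSide P Q) := by
  simp only [sepCount, bind_pure_comp, fmap_def, filter_image]
  exact card_image_of_injective _ coe_injective

theorem natCast_sepCount (Pts : Finset (ℝ × ℝ)) (P Q : ℝ × ℝ) :
    (sepCount Pts P Q : ZMod 2) =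
      ∑ s ∈ powersetCard 2 Pts, oppSideBit (affineSpan ℝ (s : Set (ℝ × ℝ))) P Q := by
  rw [sepCount_eq_card_filter, natCast_card_filter]
  refine sum_subset (powersetCard_mono (sdiff_subset (t := {P, Q}))) fun s hs hs' => ?_
  have hmem : P ∈ s ∨ Q ∈ s := by
    by_contra! h
    exact hs' (mem_powersetCard.2 ⟨by grind, (mem_powersetCard.1 hs).2⟩)
  rcases hmem with h | h
  · exact oppSideBit_eq_zero_of_left_mem (mem_affineSpan ℝ (mem_coe.2 h)) Q
  · exact oppSideBit_eq_zero_of_right_mem P (mem_affineSpan ℝ (mem_coe.2 h))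

theorem GenPos.natCast_sepCount_triangle (hgen : GenPos Pts) (hP : P ∈ Pts) (hQ : Q ∈ Pts)
    (hR : R ∈ Pts) (hPQ : P ≠ Q) (hPR : P ≠ R) (hQR : Q ≠ R) :
    (sepCount Pts P Q + sepCount Pts Q R + sepCount Pts P R : ZMod 2) = #(Pts \ {P, Q, R}) := by
  have hsub : {P, Q, R} ⊆ Pts := by grind
  have across : ∀ S ∈ Pts \ {P, Q, R}, ∑ A ∈ ({P, Q, R} : Finset (ℝ × ℝ)),
      triangleCrossings (affineSpan ℝ (({A, S} : Finset (ℝ × ℝ)) : Set (ℝ × ℝ))) P Q R = 1 := by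
    intro S hS
    simp only [mem_sdiff, mem_insert, mem_singleton, not_or] at hS
    obtain ⟨hS, hSP, hSQ, hSR⟩ := hS
    rw [sum_insert (by simp [hPQ, hPR]), sum_insert (by simp [hQR]), sum_singleton, ← add_assoc]
    simp only [coe_pair]
    exact triangleCrossings_vertex_lines
      (hgen.signedArea_ne_zero hP hS hQ (Ne.symm hSP) hPQ hSQ)
      (hgen.signedArea_ne_zero hP hS hR (Ne.symm hSP) hPR hSR)
      (hgen.signedArea_ne_zero hQ hS hR (Ne.symm hSQ) hQR hSR)
  have outside : ∀ s ∈ powersetCard 2 (Pts \ {P, Q, R}),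
      triangleCrossings (affineSpan ℝ (s : Set (ℝ × ℝ))) P Q R = 0 := by
    intro s hs
    obtain ⟨hsub, A, B, hAB, rfl⟩ := And.imp_right card_eq_two.1 (mem_powersetCard.1 hs)
    have hA := hsub (mem_insert_self A {B})
    have hB := hsub (mem_insert_of_mem (mem_singleton_self B))
    simp only [mem_sdiff, mem_insert, mem_singleton, not_or] at hA hB
    obtain ⟨hA, hAP, hAQ, hAR⟩ := hA
    obtain ⟨hB, hBP, hBQ, hBR⟩ := hB
    rw [coe_pair]
    exact triangleCrossings_eq_zero (mem_affineSpan_pair_iff_signedArea_eq_zero hAB)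
      (hgen.signedArea_ne_zero hA hB hP hAB hAP hBP)
      (hgen.signedArea_ne_zero hA hB hQ hAB hAQ hBQ)
      (hgen.signedArea_ne_zero hA hB hR hAB hAR hBR)
  calc (sepCount Pts P Q + sepCount Pts Q R + sepCount Pts P R : ZMod 2)
      = ∑ s ∈ powersetCard 2 ({P, Q, R} ∪ Pts \ {P, Q, R}),
          triangleCrossings (affineSpan ℝ (s : Set (ℝ × ℝ))) P Q R := by
        simp only [natCast_sepCount, triangleCrossings, sum_add_distrib,
          union_sdiff_of_subset hsub]
    _ = #(Pts \ {P, Q, R}) := by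
        rw [sum_powersetCard_two_union disjoint_sdiff, sum_triangleCrossings_vertices hPQ hPR hQR,
          sum_comm, sum_congr rfl across, sum_eq_zero outside]
        simp

theorem GenPos.odd_sepCount_triangle (hgen : GenPos Pts) (hP : P ∈ Pts) (hQ : Q ∈ Pts)
    (hR : R ∈ Pts) (hPQ : P ≠ Q) (hPR : P ≠ R) (hQR : Q ≠ R) :
    Odd (sepCount Pts P Q + sepCount Pts Q R + sepCount Pts P R + #Pts) := by
  have hcard : #(Pts \ {P, Q, R}) + 3 = #Pts := by
    have hthree : #{P, Q, R} = 3 := card_eq_three.2 ⟨P, Q, R, hPQ, hPR, hQR, rfl⟩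
    rw [← hthree]
    exact card_sdiff_add_card_eq_card (by grind)
  have h := hgen.natCast_sepCount_triangle hP hQ hR hPQ hPR hQR
  norm_cast at h
  rw [ZMod.natCast_eq_natCast_iff'] at h
  rw [Nat.odd_iff]
  omega

end Configuration

theorem odd_card_odd_sepCount_general (Pts : Finset (ℝ × ℝ)) (hgen : GenPos Pts) :
    ∃ i ≤ Pts.card,
      (relatedPairs Pts fun P Q => Even (sepCount Pts P Q + Pts.card)).card
        = i * (Pts.card - i) ∧
      (relatedPairs Pts fun P Q => Odd (sepCount Pts P Q + Pts.card)).card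
        = Pts.card.choose 2 - i * (Pts.card - i) := by
  have : Std.Symm fun P Q => Even (sepCount Pts P Q + Pts.card) :=
    ⟨fun P Q h => sepCount_comm Pts P Q ▸ h⟩
  have hxor : ∀ P ∈ Pts, ∀ Q ∈ Pts, ∀ R ∈ Pts, P ≠ Q → P ≠ R → Q ≠ R →
      (Even (sepCount Pts Q R + Pts.card) ↔
        Xor (Even (sepCount Pts P Q + Pts.card)) (Even (sepCount Pts P R + Pts.card))) := by
    intro P hP Q hQ R hR hPQ hPR hQR
    have h := hgen.odd_sepCount_triangle hP hQ hR hPQ hPR hQR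
    grind
  obtain ⟨i, hi, hcard⟩ := exists_card_relatedPairs_eq_mul hxor
  refine ⟨i, hi, hcard, ?_⟩
  simpa only [Nat.not_even_iff_odd, hcard] using
    card_relatedPairs_not (s := Pts) (r := fun P Q => Even (sepCount Pts P Q + Pts.card))

/-- If `n` is odd, then for some `0 ≤ i ≤ n` exactly `i * (n - i)` of the unordered pairs
of distinct points of the configuration have an odd number of separating lines, and the
remaining pairs have an even number of separating lines. -/
theorem odd_card_odd_sepCount (n : ℕ) (Pts : Finset (ℝ × ℝ))
    (hgen : GenPos Pts) (hcard : Pts.card = n) (hn : Odd n) :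
    ∃ i ≤ n,
      ((Finset.powersetCard 2 Pts).filter
        (fun s => ∃ P Q : ℝ × ℝ, P ≠ Q ∧ s = {P, Q} ∧ Odd (sepCount Pts P Q))).card
        = i * (n - i) ∧
      ((Finset.powersetCard 2 Pts).filter
        (fun s => ∃ P Q : ℝ × ℝ, P ≠ Q ∧ s = {P, Q} ∧ Even (sepCount Pts P Q))).card
        = n.choose 2 - i * (n - i) := by
  subst hcard
  simpa only [relatedPairs, Nat.even_add', Nat.odd_add', hn, true_iff, iff_true]
    using odd_card_odd_sepCount_general Pts hgen

end
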